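/- Let 1 ≤ m < n be integers, let 0 < β < 1, and let G be a cograph on n vertices. Then there is a partition V(G) = S ∪ V₁ ∪ ⋯ ∪ V_t and a set of pairs M ⊆ {{i,j} : 1 ≤ i < j ≤ t} forming a matching (no two pairs of M share an index), such that: (1) |S| ≤ (2·⌈n/m⌉ − 3)·10βm ≤ 20βn; (2) βm ≤ |Vᵢ| ≤ m for every 1 ≤ i ≤ t; (3) for every 1 ≤ i < j ≤ t with {i,j} ∉ M, the pair (Vᵢ, Vⱼ) is homogeneous (the bipartite graph between Vᵢ and Vⱼ in G is complete or empty); (4) for every {i,j} ∈ M there are V'ᵢ ⊆ Vᵢ and V'ⱼ ⊆ Vⱼ with |V'ᵢ|, |V'ⱼ| ≥ β³m/2 such that either V'ᵢ is complete to Vⱼ and V'ⱼ is complete to Vᵢ in G, or V'ᵢ is empty to Vⱼ and V'ⱼ is empty to Vᵢ in G. -/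

import Mathlib

open Finset

/-- A graph is a cograph iff it contains no induced path on 4 vertices. -/
def IsCograph {V : Type} (G : SimpleGraph V) : Prop :=
  ¬ ∃ a b c d : V, a ≠ b ∧ a ≠ c ∧ a ≠ d ∧ b ≠ c ∧ b ≠ d ∧ c ≠ d ∧
    G.Adj a b ∧ G.Adj b c ∧ G.Adj c d ∧ ¬ G.Adj a c ∧ ¬ G.Adj a d ∧ ¬ G.Adj b d

/-- `A` is complete to `B` in `G`. -/
def CompleteTo {V : Type} (G : SimpleGraph V) (A B : Finset V) : Prop :=
  ∀ a ∈ A, ∀ b ∈ B, G.Adj a b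

/-- `A` is empty to `B` in `G`. -/
def EmptyTo {V : Type} (G : SimpleGraph V) (A B : Finset V) : Prop :=
  ∀ a ∈ A, ∀ b ∈ B, ¬ G.Adj a b


section helpers

set_option linter.unusedSectionVars false

variable {V : Type} [DecidableEq V]

def HomP (G : SimpleGraph V) (A B : Finset V) : Prop := CompleteTo G A B ∨ EmptyTo G A B

def Stag (G : SimpleGraph V) (d : ℝ) (A B : Finset V) : Prop :=
  ∃ A' ⊆ A, ∃ B' ⊆ B, d ≤ (A'.card : ℝ) ∧ d ≤ (B'.card : ℝ) ∧
    ((CompleteTo G A' B ∧ CompleteTo G B' A) ∨ (EmptyTo G A' B ∧ EmptyTo G B' A))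

def Good (G : SimpleGraph V) (m : ℕ) (β : ℝ) (Q : Finset V → Prop) (U : Finset V) (L : ℝ) : Prop :=
  ∃ P : Finset (Finset V),
    (∀ A ∈ P, A ⊆ U ∧ β * m ≤ (A.card : ℝ) ∧ (A.card : ℝ) ≤ m ∧ Q A) ∧
    (∀ A ∈ P, ∀ B ∈ P, A ≠ B → Disjoint A B) ∧
    (((U \ P.biUnion id).card : ℝ) ≤ L) ∧
    (∀ A ∈ P, ∀ B ∈ P, ∀ C ∈ P, A ≠ B → A ≠ C → ¬ HomP G A B → ¬ HomP G A C → B = C) ∧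
    (∀ A ∈ P, ∀ B ∈ P, A ≠ B → ¬ HomP G A B → Stag G (β ^ 3 * m / 2) A B)

lemma HomP.symm {G : SimpleGraph V} {A B : Finset V} (h : HomP G A B) : HomP G B A := by
  rcases h with h | h
  · exact Or.inl fun b hb a ha => (h a ha b hb).symm
  · exact Or.inr fun b hb a ha e => h a ha b hb e.symm

lemma Stag.symm {G : SimpleGraph V} {d : ℝ} {A B : Finset V} (h : Stag G d A B) :
    Stag G d B A := by
  obtain ⟨A', hA, B', hB, h1, h2, h3⟩ := h
  exact ⟨B', hB, A', hA, h2, h1, h3.imp And.symm And.symm⟩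

variable {G : SimpleGraph V} {m : ℕ} {β : ℝ}

lemma Good.mono {Q Q' : Finset V → Prop} {U : Finset V} {L L' : ℝ} (h : Good G m β Q U L)
    (hQ : ∀ A, Q A → Q' A) (hL : L ≤ L') : Good G m β Q' U L' := by
  obtain ⟨P, h1, h2, h3, h4, h5⟩ := h
  exact ⟨P, fun A hA => ⟨(h1 A hA).1, (h1 A hA).2.1, (h1 A hA).2.2.1, hQ _ (h1 A hA).2.2.2⟩,
    h2, h3.trans hL, h4, h5⟩

lemma Good.discard {Q : Finset V → Prop} {U : Finset V} {L : ℝ} (h : (U.card : ℝ) ≤ L) :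
    Good G m β Q U L :=
  ⟨∅, by simp, by simp, by simpa using h, by simp, by simp⟩

lemma Good.emit {Q : Finset V → Prop} {U : Finset V} (hQ : Q U) (h1 : β * m ≤ (U.card : ℝ))
    (h2 : (U.card : ℝ) ≤ m) : Good G m β Q U 0 := by
  refine ⟨{U}, ?_, ?_, ?_, ?_, ?_⟩
  · intro A hA
    rw [mem_singleton.1 hA]
    exact ⟨subset_rfl, h1, h2, hQ⟩
  · simp
  · simp
  · simp
  · simp

lemma Good.single (hβ : 0 ≤ β) {Q : Finset V → Prop} {U : Finset V} (hQ : Q U)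
    (h2 : (U.card : ℝ) ≤ m) : Good G m β Q U (β * m) := by
  by_cases h : β * m ≤ (U.card : ℝ)
  · exact (Good.emit hQ h h2).mono (fun _ h => h) (by positivity)
  · exact Good.discard (le_of_not_ge h)

lemma Good.pair {Q : Finset V → Prop} {A B : Finset V} (hA : Q A) (hB : Q B)
    (hA1 : β * m ≤ (A.card : ℝ)) (hA2 : (A.card : ℝ) ≤ m)
    (hB1 : β * m ≤ (B.card : ℝ)) (hB2 : (B.card : ℝ) ≤ m) (hd : Disjoint A B)
    (hs : Stag G (β ^ 3 * m / 2) A B) : Good G m β Q (A ∪ B) 0 := by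
  refine ⟨{A, B}, ?_, ?_, ?_, ?_, ?_⟩
  · intro X hX
    simp only [mem_insert, mem_singleton] at hX
    rcases hX with rfl | rfl
    · exact ⟨subset_union_left, hA1, hA2, hA⟩
    · exact ⟨subset_union_right, hB1, hB2, hB⟩
  · intro X hX Y hY hne
    simp only [mem_insert, mem_singleton] at hX hY
    rcases hX with rfl | rfl <;> rcases hY with rfl | rfl
    · exact absurd rfl hne
    · exact hd
    · exact hd.symm
    · exact absurd rfl hne
  · simp
  · intro X hX Y hY Z hZ h1 h2 _ _
    simp only [mem_insert, mem_singleton] at hX hY hZ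
    grind
  · intro X hX Y hY hne _
    simp only [mem_insert, mem_singleton] at hX hY
    rcases hX with rfl | rfl <;> rcases hY with rfl | rfl
    · exact absurd rfl hne
    · exact hs
    · exact hs.symm
    · exact absurd rfl hne

lemma Good.union {Q1 Q2 Q : Finset V → Prop} {U1 U2 : Finset V} {L1 L2 : ℝ}
    (g1 : Good G m β Q1 U1 L1) (g2 : Good G m β Q2 U2 L2) (hd : Disjoint U1 U2)
    (hQ1 : ∀ A, Q1 A → Q A) (hQ2 : ∀ A, Q2 A → Q A)
    (hh : ∀ A B, A ⊆ U1 → B ⊆ U2 → Q1 A → Q2 B → HomP G A B) :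
    Good G m β Q (U1 ∪ U2) (L1 + L2) := by
  obtain ⟨P1, a1, a2, a3, a4, a5⟩ := g1
  obtain ⟨P2, b1, b2, b3, b4, b5⟩ := g2
  have hc : ∀ A ∈ P1, ∀ B ∈ P2, HomP G A B := fun A hA B hB =>
    hh A B (a1 A hA).1 (b1 B hB).1 (a1 A hA).2.2.2 (b1 B hB).2.2.2
  have hc' : ∀ A ∈ P1, ∀ B ∈ P2, HomP G B A := fun A hA B hB => (hc A hA B hB).symm
  have hcd : ∀ A ∈ P1, ∀ B ∈ P2, Disjoint A B := fun A hA B hB =>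
    Finset.disjoint_of_subset_left (a1 A hA).1 (Finset.disjoint_of_subset_right (b1 B hB).1 hd)
  refine ⟨P1 ∪ P2, ?_, ?_, ?_, ?_, ?_⟩
  · intro A hA
    rcases mem_union.1 hA with h | h
    · obtain ⟨c1, c2, c3, c4⟩ := a1 A h
      exact ⟨c1.trans subset_union_left, c2, c3, hQ1 _ c4⟩
    · obtain ⟨c1, c2, c3, c4⟩ := b1 A h
      exact ⟨c1.trans subset_union_right, c2, c3, hQ2 _ c4⟩
  · intro A hA B hB hne
    rcases mem_union.1 hA with h | h <;> rcases mem_union.1 hB with h' | h'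
    · exact a2 A h B h' hne
    · exact hcd A h B h'
    · exact (hcd B h' A h).symm
    · exact b2 A h B h' hne
  · have : (U1 ∪ U2) \ (P1 ∪ P2).biUnion id ⊆ (U1 \ P1.biUnion id) ∪ (U2 \ P2.biUnion id) := by
      intro x hx
      simp only [mem_sdiff, mem_union, mem_biUnion, id] at hx ⊢
      obtain ⟨h, h'⟩ := hx
      rcases h with h | h
      · exact Or.inl ⟨h, fun ⟨a, ha, hxa⟩ => h' ⟨a, Or.inl ha, hxa⟩⟩
      · exact Or.inr ⟨h, fun ⟨a, ha, hxa⟩ => h' ⟨a, Or.inr ha, hxa⟩⟩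
    have h1 := (card_le_card this).trans (card_union_le _ _)
    have h2 : (((U1 ∪ U2) \ (P1 ∪ P2).biUnion id).card : ℝ) ≤
      ((U1 \ P1.biUnion id).card : ℝ) + ((U2 \ P2.biUnion id).card : ℝ) := by exact_mod_cast h1
    linarith
  · intro A hA B hB C hC n1 n2 h1 h2
    rcases mem_union.1 hA with h | h <;> rcases mem_union.1 hB with h' | h' <;>
      rcases mem_union.1 hC with h'' | h''
    · exact a4 A h B h' C h'' n1 n2 h1 h2
    · exact absurd (hc A h C h'') h2
    · exact absurd (hc A h B h') h1
    · exact absurd (hc A h B h') h1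
    · exact absurd (hc' B h' A h) h1
    · exact absurd (hc' B h' A h) h1
    · exact absurd (hc' C h'' A h) h2
    · exact b4 A h B h' C h'' n1 n2 h1 h2
  · intro A hA B hB n1 h1
    rcases mem_union.1 hA with h | h <;> rcases mem_union.1 hB with h' | h'
    · exact a5 A h B h' n1 h1
    · exact absurd (hc A h B h') h1
    · exact absurd (hc' B h' A h) h1
    · exact b5 A h B h' n1 h1

/-- discarding a set -/
lemma Good.add_discard {Q : Finset V → Prop} {U W : Finset V} {L d : ℝ}
    (g : Good G m β Q U L) (hU : U ⊆ W) (hd : (((W \ U).card : ℕ) : ℝ) ≤ d) :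
    Good G m β Q W (L + d) := by
  obtain ⟨P, a1, a2, a3, a4, a5⟩ := g
  refine ⟨P, fun A hA => ⟨(a1 A hA).1.trans hU, (a1 A hA).2⟩, a2, ?_, a4, a5⟩
  have : W \ P.biUnion id ⊆ (U \ P.biUnion id) ∪ (W \ U) := by
    intro x hx
    simp only [mem_sdiff, mem_union] at hx ⊢
    tauto
  have h1 := (card_le_card this).trans (card_union_le _ _)
  have h2 : ((W \ P.biUnion id).card : ℝ) ≤
    ((U \ P.biUnion id).card : ℝ) + ((W \ U).card : ℝ) := by exact_mod_cast h1
  linarith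

def MonoS (σ : V → Bool) (A : Finset V) : Prop := ∃ s, ∀ x ∈ A, σ x = s

def Ordered (G : SimpleGraph V) (r : V → ℕ) (σ : V → Bool) (C : Finset V) : Prop :=
  (∀ x ∈ C, ∀ y ∈ C, r x < r y → (G.Adj x y ↔ σ x = true)) ∧
  (∀ x ∈ C, ∀ y ∈ C, r x = r y → σ x = σ y)

lemma Ordered.sub {r : V → ℕ} {σ : V → Bool} {C D : Finset V} (h : Ordered G r σ C)
    (hD : D ⊆ C) : Ordered G r σ D :=
  ⟨fun x hx y hy => h.1 x (hD hx) y (hD hy), fun x hx y hy => h.2 x (hD hx) y (hD hy)⟩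

lemma MonoS.hom {σ : V → Bool} {A B : Finset V} (hA : MonoS σ A)
    (h : ∀ x ∈ A, ∀ y ∈ B, (G.Adj x y ↔ σ x = true)) : HomP G A B := by
  obtain ⟨s, hs⟩ := hA
  cases s
  · right
    intro a ha b hb e
    have := (h a ha b hb).1 e
    simp [hs a ha] at this
  · left
    intro a ha b hb
    exact (h a ha b hb).2 (hs a ha)

lemma seg_end (hβ0 : 0 < β) (hβ1 : β < 1) (hm : 1 ≤ m) (r : V → ℕ) (σ : V → Bool) (s : Bool) :
    ∀ n : ℕ, ∀ C A0 : Finset V, C.card = n → C.card ≤ m → Ordered G r σ C → A0 ⊆ C →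
      β ^ 3 * m / 2 ≤ (A0.card : ℝ) → (∀ a ∈ A0, σ a = s) →
      (∀ a ∈ A0, ∀ x ∈ C, σ x = !s → r a < r x) →
      Good G m β (MonoS σ) C (2 * (β * m) + β ^ 2 / 2 * C.card) := by
  intro n
  induction n using Nat.strong_induction_on with
  | _ n ih =>
  intro C A0 hn hCm hO hA0 hA0c hA0s hA0r
  have hmR : (1 : ℝ) ≤ m := by exact_mod_cast hm
  have hbm : 0 < β * m := by positivity
  have hδ : β ^ 3 * m / 2 ≤ β * m := by
    have : β ^ 3 ≤ β := by
      have : β ^ 2 ≤ 1 := by nlinarith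
      nlinarith
    nlinarith
  have hδ0 : 0 < β ^ 3 * m / 2 := by positivity
  have hle : ∀ D ⊆ C, (D.card : ℝ) ≤ m := fun D hD => by
    exact_mod_cast (card_le_card hD).trans hCm
  have hpos : 0 ≤ β ^ 2 / 2 * (C.card : ℝ) := by positivity
  set Cp := C.filter (fun x => σ x = s) with hCp
  set Cn := C.filter (fun x => σ x = !s) with hCn
  have hCpC : Cp ⊆ C := filter_subset _ _
  have hCnC : Cn ⊆ C := filter_subset _ _
  have bs : ∀ x, σ x = s ∨ σ x = !s := fun x => by cases σ x <;> cases s <;> simp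
  have bs' : ∀ x, σ x = s → σ x = !s → False := fun x h => by rw [h]; cases s <;> simp
  have hmp : ∀ D ⊆ Cp, MonoS σ D := fun D hD => ⟨s, fun x hx => (mem_filter.1 (hD hx)).2⟩
  have hmn : ∀ D ⊆ Cn, MonoS σ D := fun D hD => ⟨!s, fun x hx => (mem_filter.1 (hD hx)).2⟩
  have hdp : C \ Cp ⊆ Cn := by
    intro x hx
    have := bs x
    simp only [hCp, hCn, mem_sdiff, mem_filter] at hx ⊢
    tauto
  have hdn : C \ Cn ⊆ Cp := by
    intro x hx
    have := bs x
    simp only [hCp, hCn, mem_sdiff, mem_filter] at hx ⊢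
    tauto
  by_cases c1 : (Cn.card : ℝ) < β * m
  · have := (Good.single (G := G) hβ0.le (hmp Cp subset_rfl) (hle _ hCpC)).add_discard hCpC
      (d := β * m) ((Nat.cast_le.2 (card_le_card hdp)).trans c1.le)
    exact this.mono (fun _ h => h) (by linarith)
  push Not at c1
  -- the threshold
  have hne : Cn.Nonempty := by
    rw [← card_pos]
    have : (0 : ℝ) < Cn.card := by linarith
    exact_mod_cast this
  have hex : ∃ x ∈ Cn, β ^ 3 * m / 2 ≤ ((Cn.filter (fun y => r x ≤ r y)).card : ℝ) := by
    obtain ⟨x, hx, hmin⟩ := exists_min_image Cn r hne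
    refine ⟨x, hx, ?_⟩
    rw [filter_true_of_mem hmin]
    linarith
  obtain ⟨z, hz, hmax⟩ := exists_max_image
    (Cn.filter (fun x => β ^ 3 * m / 2 ≤ ((Cn.filter (fun y => r x ≤ r y)).card : ℝ))) r
    (by obtain ⟨x, h1, h2⟩ := hex; exact ⟨x, mem_filter.2 ⟨h1, h2⟩⟩)
  obtain ⟨hzn, hzc⟩ := mem_filter.1 hz
  set D := Cn.filter (fun y => r z < r y) with hD
  have hDc : (D.card : ℝ) < β ^ 3 * m / 2 := by
    by_contra hcon
    push Not at hcon
    have hDne : D.Nonempty := by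
      rw [← card_pos]
      have : (0 : ℝ) < D.card := by linarith
      exact_mod_cast this
    obtain ⟨w, hw, hwmin⟩ := exists_min_image D r hDne
    have hw' := mem_filter.1 hw
    have : D ⊆ Cn.filter (fun y => r w ≤ r y) := fun y hy =>
      mem_filter.2 ⟨(mem_filter.1 hy).1, hwmin y hy⟩
    have h2 := hmax w (mem_filter.2 ⟨hw'.1, hcon.trans (by exact_mod_cast card_le_card this)⟩)
    omega
  set X := Cp.filter (fun y => r z < r y) with hX
  have hXC : X ⊆ C := (filter_subset _ _).trans hCpC
  have hzC := hCnC hzn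
  have hzs : σ z = !s := (mem_filter.1 hzn).2
  by_cases c2 : β * m ≤ (X.card : ℝ)
  · -- peel
    set C' := C.filter (fun y => r y ≤ r z) with hC'
    have hC'C : C' ⊆ C := filter_subset _ _
    have hdis : Disjoint C' X := by
      rw [Finset.disjoint_left]
      intro x h1 h2
      have := (mem_filter.1 h1).2
      have := (mem_filter.1 h2).2
      omega
    have hcard : C'.card + X.card ≤ C.card := by
      rw [← card_union_of_disjoint hdis]
      exact card_le_card (union_subset hC'C hXC)
    have hXpos : 0 < X.card := by
      have : (0 : ℝ) < X.card := by linarith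
      exact_mod_cast this
    have g1 := ih C'.card (by omega) C' A0 rfl (by omega) (hO.sub hC'C)
      (fun a ha => mem_filter.2 ⟨hA0 ha, (hA0r a ha z hzC hzs).le⟩) hA0c hA0s
      (fun a ha x hx => hA0r a ha x (hC'C hx))
    have g2 := Good.emit (G := G) (hmp X (filter_subset _ _)) c2 (hle _ hXC)
    have g3 := g1.union g2 (Q := MonoS σ) hdis (fun _ h => h) (fun _ h => h) (by
      intro A B hA hB h1 _
      apply h1.hom
      intro x hx y hy
      apply hO.1 x (hC'C (hA hx)) y (hXC (hB hy))
      have := (mem_filter.1 (hA hx)).2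
      have := (mem_filter.1 (hB hy)).2
      omega)
    have hsd : C \ (C' ∪ X) ⊆ D := by
      intro x hx
      have := bs x
      simp only [hC', hX, hD, hCp, hCn, mem_sdiff, mem_union, mem_filter] at hx ⊢
      have := lt_or_ge (r z) (r x)
      tauto
    have g4 := g3.add_discard (union_subset hC'C hXC)
      ((Nat.cast_le.2 (card_le_card hsd)).trans hDc.le)
    refine g4.mono (fun _ h => h) ?_
    have hcR : (C'.card : ℝ) + X.card ≤ C.card := by exact_mod_cast hcard
    have : β ^ 2 / 2 * (C'.card : ℝ) + β ^ 2 / 2 * (β * m) ≤ β ^ 2 / 2 * C.card := by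
      rw [← mul_add]
      exact mul_le_mul_of_nonneg_left (by linarith) (by positivity)
    have e : β ^ 2 / 2 * (β * m) = β ^ 3 * m / 2 := by ring
    linarith
  push Not at c2
  set A := Cp.filter (fun y => r y ≤ r z) with hA
  have hAC : A ⊆ C := (filter_subset _ _).trans hCpC
  have hsd : C \ (A ∪ Cn) ⊆ X := by
    intro x hx
    have := bs x
    simp only [hA, hX, hCp, hCn, mem_sdiff, mem_union, mem_filter] at hx ⊢
    have := lt_or_ge (r z) (r x)
    tauto
  have hsdc := (Nat.cast_le (α := ℝ).2 (card_le_card hsd)).trans c2.le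
  have hdis : Disjoint A Cn := by
    rw [Finset.disjoint_left]
    intro x h1 h2
    exact bs' x (mem_filter.1 (mem_filter.1 h1).1).2 (mem_filter.1 h2).2
  by_cases c3 : β * m ≤ (A.card : ℝ)
  · have hlt : ∀ a ∈ A, r a < r z := by
      intro a ha
      obtain ⟨h1, h2⟩ := mem_filter.1 ha
      refine lt_of_le_of_ne h2 fun e => ?_
      have := hO.2 a (hAC ha) z hzC e
      exact bs' a (mem_filter.1 h1).2 (this.trans hzs)
    have st : Stag G (β ^ 3 * m / 2) A Cn := by
      refine ⟨A0, ?_, Cn.filter (fun y => r z ≤ r y), filter_subset _ _, hA0c, hzc, ?_⟩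
      · intro a ha
        exact mem_filter.2 ⟨mem_filter.2 ⟨hA0 ha, hA0s a ha⟩, (hA0r a ha z hzC hzs).le⟩
      · have k1 : ∀ a ∈ A0, ∀ b ∈ Cn, (G.Adj a b ↔ s = true) := by
          intro a ha b hb
          rw [← hA0s a ha]
          exact hO.1 a (hA0 ha) b (hCnC hb) (hA0r a ha b (hCnC hb) (mem_filter.1 hb).2)
        have k2 : ∀ b ∈ Cn.filter (fun y => r z ≤ r y), ∀ a ∈ A, (G.Adj b a ↔ s = true) := by
          intro b hb a ha
          obtain ⟨h1, h2⟩ := mem_filter.1 hb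
          rw [G.adj_comm, ← (mem_filter.1 (mem_filter.1 ha).1).2]
          exact hO.1 a (hAC ha) b (hCnC h1) (lt_of_lt_of_le (hlt a ha) h2)
        cases s
        · right
          exact ⟨fun a ha b hb e => by simpa using (k1 a ha b hb).1 e,
            fun a ha b hb e => by simpa using (k2 a ha b hb).1 e⟩
        · left
          exact ⟨fun a ha b hb => (k1 a ha b hb).2 rfl, fun a ha b hb => (k2 a ha b hb).2 rfl⟩
    have g := Good.pair (hmp A (filter_subset _ _)) (hmn Cn subset_rfl) c3 (hle _ hAC) c1
      (hle _ hCnC) hdis st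
    exact (g.add_discard (union_subset hAC hCnC) hsdc).mono (fun _ h => h) (by linarith)
  · push Not at c3
    have g := Good.emit (G := G) (hmn Cn subset_rfl) c1 (hle _ hCnC)
    have g2 := g.add_discard (W := A ∪ Cn) subset_union_right (d := β * m) (by
      refine le_trans (Nat.cast_le.2 (card_le_card ?_)) c3.le
      intro x hx
      simp only [mem_sdiff, mem_union] at hx
      tauto)
    exact (g2.add_discard (union_subset hAC hCnC) hsdc).mono (fun _ h => h) (by linarith)

lemma seg (hβ0 : 0 < β) (hβ1 : β < 1) (hm : 1 ≤ m) (r : V → ℕ) (σ : V → Bool)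
    (C : Finset V) (hCm : C.card ≤ m) (hO : Ordered G r σ C) :
    Good G m β (MonoS σ) C (4 * (β * m)) := by
  have hmR : (1 : ℝ) ≤ m := by exact_mod_cast hm
  have hbm : 0 < β * m := by positivity
  have hb3 : β ^ 3 ≤ β := by
    have : β ^ 2 ≤ 1 := by nlinarith
    nlinarith
  have hδ : β ^ 3 * m / 2 ≤ β * m := by nlinarith
  have hδ0 : 0 < β ^ 3 * m / 2 := by positivity
  by_cases hex : ∃ t : ℕ, ∃ s : Bool, β ^ 3 * m / 2 ≤
      ((C.filter (fun x => σ x = s ∧ r x < t)).card : ℝ)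
  · classical
    have hmin := fun t => @Nat.find_min _ _ hex t
    have hsp := Nat.find_spec hex
    set t := Nat.find hex with ht
    obtain ⟨s, hs⟩ := hsp
    have ht0 : t ≠ 0 := by
      intro h0
      rw [h0] at hs
      simp at hs
      linarith
    have hpre : ∀ s', ((C.filter (fun x => σ x = s' ∧ r x < t - 1)).card : ℝ) < β ^ 3 * m / 2 := by
      intro s'
      by_contra hcon
      exact hmin (t - 1) (by omega) ⟨s', le_of_not_gt hcon⟩
    have hex2 : ∃ x ∈ C, σ x = s ∧ r x = t - 1 := by
      by_contra hcon
      push Not at hcon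
      have : C.filter (fun x => σ x = s ∧ r x < t) ⊆ C.filter (fun x => σ x = s ∧ r x < t - 1) := by
        intro x hx
        obtain ⟨h1, h2, h3⟩ := mem_filter.1 hx
        have := hcon x h1 h2
        exact mem_filter.2 ⟨h1, h2, by omega⟩
      have h3 : ((C.filter (fun x => σ x = s ∧ r x < t)).card : ℝ) ≤
        ((C.filter (fun x => σ x = s ∧ r x < t - 1)).card : ℝ) := by
          exact_mod_cast card_le_card this
      have := hpre s
      linarith
    obtain ⟨w, hwC, hws, hwt⟩ := hex2
    set D := C.filter (fun x => σ x = (!s) ∧ r x < t - 1) with hD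
    have hDC : D ⊆ C := filter_subset _ _
    have g := seg_end (G := G) hβ0 hβ1 hm r σ s _ (C \ D)
      (C.filter (fun x => σ x = s ∧ r x < t)) rfl
      ((card_le_card sdiff_subset).trans hCm) (hO.sub sdiff_subset) ?_ hs ?_ ?_
    · have g2 := g.add_discard (W := C) (d := β ^ 3 * m / 2) sdiff_subset (by
        rw [sdiff_sdiff_right_self]
        refine le_trans (Nat.cast_le.2 (card_le_card ?_)) (hpre (!s)).le
        exact inf_le_right)
      refine g2.mono (fun _ h => h) ?_
      have h1 : ((C \ D).card : ℝ) ≤ m := by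
        exact_mod_cast (card_le_card sdiff_subset).trans hCm
      have h2 : β ^ 2 / 2 * ((C \ D).card : ℝ) ≤ β ^ 2 / 2 * m :=
        mul_le_mul_of_nonneg_left h1 (by positivity)
      have h3 : β ^ 2 / 2 * m ≤ β * m :=
        mul_le_mul_of_nonneg_right (by nlinarith) (by positivity)
      linarith
    · intro x hx
      obtain ⟨h1, h2, h3⟩ := mem_filter.1 hx
      refine mem_sdiff.2 ⟨h1, fun h4 => ?_⟩
      have := (mem_filter.1 h4).2.1
      rw [h2] at this
      cases s <;> simp at this
    · intro x hx
      exact (mem_filter.1 hx).2.1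
    · intro a ha x hx hxs
      obtain ⟨h1, h2, h3⟩ := mem_filter.1 ha
      obtain ⟨h4, h5⟩ := mem_sdiff.1 hx
      have h6 : ¬ r x < t - 1 := fun h => h5 (mem_filter.2 ⟨h4, hxs, h⟩)
      have h7 : r x ≠ t - 1 := fun h => by
        have := hO.2 x h4 w hwC (h.trans hwt.symm)
        rw [hxs, hws] at this
        cases s <;> simp at this
      omega
  · push Not at hex
    apply Good.discard
    obtain ⟨N, hN⟩ : ∃ N, ∀ x ∈ C, r x < N :=
      ⟨C.sup r + 1, fun x hx => Nat.lt_succ_of_le (le_sup hx)⟩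
    have : C ⊆ C.filter (fun x => σ x = true ∧ r x < N) ∪ C.filter (fun x => σ x = false ∧ r x < N) := by
      intro x hx
      have := hN x hx
      simp only [mem_union, mem_filter]
      cases σ x <;> simp [hx, this]
    have h1 := (card_le_card this).trans (card_union_le _ _)
    have h2 : (C.card : ℝ) ≤ ((C.filter (fun x => σ x = true ∧ r x < N)).card : ℝ) +
      ((C.filter (fun x => σ x = false ∧ r x < N)).card : ℝ) := by exact_mod_cast h1
    have := hex N true
    have := hex N false
    linarith

def Split (G : SimpleGraph V) (U : Finset V) : Prop :=
  ∃ A B : Finset V, A.Nonempty ∧ B.Nonempty ∧ Disjoint A B ∧ A ∪ B = U ∧ HomP G A B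

lemma cograph_compl (h : IsCograph G) : IsCograph Gᶜ := by
  rintro ⟨a, b, c, d, h1, h2, h3, h4, h5, h6, h7, h8, h9, h10, h11, h12⟩
  simp only [SimpleGraph.compl_adj, not_and, not_not] at *
  exact h ⟨b, d, a, c, h5, h1.symm, h4, h3.symm, h6.symm, h2, h12 h5, (h11 h3).symm, h10 h2,
    fun e => h7.2 e.symm, h8.2, fun e => h9.2 e.symm⟩

lemma HomP.of_compl {A B : Finset V} (hd : Disjoint A B) (h : HomP Gᶜ A B) : HomP G A B := by
  rcases h with h | h
  · right
    intro a ha b hb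
    exact ((SimpleGraph.compl_adj _ _ _).1 (h a ha b hb)).2
  · left
    intro a ha b hb
    have hne : a ≠ b := fun e => (Finset.disjoint_left.1 hd ha) (e ▸ hb)
    by_contra hc
    exact h a ha b hb ((SimpleGraph.compl_adj _ _ _).2 ⟨hne, hc⟩)

lemma split_step (hG : IsCograph G) (U : Finset V) (v : V) (hv : v ∉ U) (A B : Finset V)
    (hA : A.Nonempty) (hB : B.Nonempty) (hd : Disjoint A B) (hU : A ∪ B = U)
    (he : EmptyTo G A B) : Split G (insert v U) := by
  by_cases hdom : ∀ w ∈ U, G.Adj v w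
  · refine ⟨{v}, U, by simp, ?_, by simpa using hv, by ext; simp, Or.inl ?_⟩
    · rw [← hU]; exact hA.mono subset_union_left
    · intro a ha b hb
      rw [mem_singleton.1 ha]; exact hdom b hb
  push Not at hdom
  obtain ⟨w, hwU, hw⟩ := hdom
  classical
  -- minimal closed set containing w
  let F := U.powerset.filter (fun Z => w ∈ Z ∧ EmptyTo G Z (U \ Z))
  have hF : ∃ Z ∈ F, Z ≠ U := by
    subst hU
    have e1 : (A ∪ B) \ A = B := by
      rw [union_sdiff_left, sdiff_eq_self_of_disjoint hd.symm]
    have e2 : (A ∪ B) \ B = A := by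
      rw [union_sdiff_right, sdiff_eq_self_of_disjoint hd]
    rcases mem_union.1 hwU with h | h
    · refine ⟨A, mem_filter.2 ⟨mem_powerset.2 subset_union_left, h, by rwa [e1]⟩, fun e => ?_⟩
      obtain ⟨b, hb⟩ := hB
      have : b ∈ A := by rw [e]; exact mem_union_right _ hb
      exact Finset.disjoint_left.1 hd this hb
    · refine ⟨B, mem_filter.2 ⟨mem_powerset.2 subset_union_right, h, ?_⟩, fun e => ?_⟩
      · rw [e2]; exact fun a ha b hb hh => he b hb a ha hh.symm
      obtain ⟨b, hb⟩ := hA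
      have : b ∈ B := by rw [e]; exact mem_union_left _ hb
      exact Finset.disjoint_left.1 hd hb this
  obtain ⟨X, hXF, hmin⟩ := exists_min_image F card ⟨_, hF.choose_spec.1⟩
  obtain ⟨hXU, hwX, hXe⟩ := mem_filter.1 hXF
  rw [mem_powerset] at hXU
  have hXne : X ≠ U := by
    rintro rfl
    obtain ⟨Z, hZ, hne⟩ := hF
    have := hmin Z hZ
    exact hne (eq_of_subset_of_card_le (mem_powerset.1 (mem_filter.1 hZ).1) this)
  have hYne : (U \ X).Nonempty := by
    rw [sdiff_nonempty]
    exact fun h => hXne (hXU.antisymm h)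
  by_cases c1 : ∀ x ∈ X, ¬ G.Adj v x
  · refine ⟨X, insert v (U \ X), ⟨w, hwX⟩, by simp, ?_, ?_, Or.inr ?_⟩
    · rw [Finset.disjoint_left]
      intro x hx h
      rcases mem_insert.1 h with rfl | h
      · exact hv (hXU hx)
      · exact (mem_sdiff.1 h).2 hx
    · rw [union_insert, union_sdiff_of_subset hXU]
    · intro a ha b hb
      rcases mem_insert.1 hb with rfl | h
      · exact fun e => c1 a ha e.symm
      · exact hXe a ha b h
  by_cases c2 : ∀ y ∈ U \ X, ¬ G.Adj v y
  · refine ⟨U \ X, insert v X, hYne, by simp, ?_, ?_, Or.inr ?_⟩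
    · rw [Finset.disjoint_left]
      intro x hx h
      rcases mem_insert.1 h with rfl | h
      · exact hv (mem_sdiff.1 hx).1
      · exact (mem_sdiff.1 hx).2 h
    · rw [union_insert, sdiff_union_of_subset hXU]
    · intro a ha b hb
      rcases mem_insert.1 hb with rfl | h
      · exact fun e => c2 a ha e.symm
      · exact fun e => hXe b h a ha e.symm
  push Not at c1 c2
  obtain ⟨x0, hx0, hvx0⟩ := c1
  obtain ⟨z, hz, hvz⟩ := c2
  exfalso
  let Z := X.filter (fun x => ¬ G.Adj v x)
  have hZX : Z ⊆ X := filter_subset _ _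
  have hZlt : Z.card < X.card := by
    apply card_lt_card
    refine ⟨hZX, fun h => (mem_filter.1 (h hx0)).2 hvx0⟩
  have hnot : ¬ EmptyTo G Z (U \ Z) := by
    intro h
    have := hmin Z (mem_filter.2 ⟨mem_powerset.2 (hZX.trans hXU), mem_filter.2 ⟨hwX, hw⟩, h⟩)
    omega
  unfold EmptyTo at hnot
  push Not at hnot
  obtain ⟨y, hy, x, hx, hyx⟩ := hnot
  obtain ⟨hyX, hvy⟩ := mem_filter.1 hy
  obtain ⟨hxU, hxZ⟩ := mem_sdiff.1 hx
  have hxX : x ∈ X := by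
    by_contra h
    exact hXe y hyX x (mem_sdiff.2 ⟨hxU, h⟩) hyx
  have hvx : G.Adj v x := by
    by_contra h
    exact hxZ (mem_filter.2 ⟨hxX, h⟩)
  have hzx : ¬ G.Adj z x := fun e => hXe x hxX z hz e.symm
  have hzy : ¬ G.Adj z y := fun e => hXe y hyX z hz e.symm
  obtain ⟨hzU, hzX⟩ := mem_sdiff.1 hz
  refine hG ⟨z, v, x, y, hvz.ne.symm, ?_, ?_, hvx.ne, ?_, hyx.ne.symm, hvz.symm, hvx, hyx.symm,
    hzx, hzy, hvy⟩
  · rintro rfl; exact hzX hxX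
  · rintro rfl; exact hzX hyX
  · rintro rfl; exact hv (hXU hyX)

lemma cograph_split (hG : IsCograph G) (U : Finset V) : 2 ≤ U.card → Split G U := by
  induction U using Finset.induction_on with
  | empty => simp
  | insert v U hv ih =>
    intro h
    rw [card_insert_of_notMem hv] at h
    by_cases h2 : 2 ≤ U.card
    · obtain ⟨A, B, hA, hB, hd, hU, hh⟩ := ih h2
      rcases hh with hh | hh
      · have := split_step (cograph_compl hG) U v hv A B hA hB hd hU
          (fun a ha b hb e => ((SimpleGraph.compl_adj _ _ _).1 e).2 (hh a ha b hb))
        obtain ⟨A, B, hA, hB, hd, hU, hh⟩ := this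
        exact ⟨A, B, hA, hB, hd, hU, hh.of_compl hd⟩
      · exact split_step hG U v hv A B hA hB hd hU hh
    · obtain ⟨u, rfl⟩ := card_eq_one.1 (show U.card = 1 by omega)
      refine ⟨{v}, {u}, by simp, by simp, by simpa using hv, by ext; simp, ?_⟩
      by_cases e : G.Adj v u
      · left; intro a ha b hb
        rw [mem_singleton.1 ha, mem_singleton.1 hb]; exact e
      · right; intro a ha b hb
        rw [mem_singleton.1 ha, mem_singleton.1 hb]; exact e

lemma HomP.sub {A B A' B' : Finset V} (h : HomP G A B) (hA : A' ⊆ A) (hB : B' ⊆ B) :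
    HomP G A' B' :=
  h.imp (fun h a ha b hb => h a (hA ha) b (hB hb)) (fun h a ha b hb => h a (hA ha) b (hB hb))

lemma main_rec (hG : IsCograph G) (hβ0 : 0 < β) (hβ1 : β < 1) (hm : 1 ≤ m) :
    ∀ n : ℕ, ∀ (U C : Finset V) (r : V → ℕ) (σ : V → Bool) (k : ℕ), U.card = n → m < U.card →
      C.card ≤ m → Disjoint C U → Ordered G r σ C →
      (∀ x ∈ C, ∀ y ∈ U, (G.Adj x y ↔ σ x = true)) → C.card + U.card ≤ k * m →
      Good G m β (fun _ => True) (C ∪ U) ((20 * k - 30) * (β * m)) := by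
  intro n
  induction n using Nat.strong_induction_on with
  | _ n ih =>
  intro U C r σ k hn hmU hCm hCU hO hCσ hk
  have hmR : (1 : ℝ) ≤ m := by exact_mod_cast hm
  have hbm : 0 < β * m := by positivity
  have hk2 : 2 ≤ k := by
    by_contra h
    have : k * m ≤ 1 * m := Nat.mul_le_mul_right _ (by omega)
    omega
  have hk2R : (2 : ℝ) ≤ k := by exact_mod_cast hk2
  have gC := seg (G := G) hβ0 hβ1 hm r σ C hCm hO
  have fin : ∀ L : ℝ, Good G m β (fun _ => True) U L → 4 * (β * m) + L ≤ (20 * k - 30) * (β * m) →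
      Good G m β (fun _ => True) (C ∪ U) ((20 * k - 30) * (β * m)) := by
    intro L gU hL
    refine (gC.union gU (Q := fun _ => True) hCU (fun _ _ => trivial) (fun _ _ => trivial) ?_).mono
      (fun _ h => h) hL
    intro A B hA hB h1 _
    exact h1.hom fun x hx y hy => hCσ x (hA hx) y (hB hy)
  -- the recursion from the empty segment
  have ih0 : ∀ (W : Finset V) (k' : ℕ), W.card < U.card → m < W.card → W.card ≤ k' * m →
      Good G m β (fun _ => True) W ((20 * k' - 30) * (β * m)) := by
    intro W k' h1 h2 h3
    have := ih W.card (by omega) W ∅ (fun _ => 0) (fun _ => true) k' rfl h2 (by simp) (by simp)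
      ⟨by simp, by simp⟩ (by simp) (by simpa using h3)
    simpa using this
  obtain ⟨H1, H2, n1, n2, hd, hU, hh⟩ := cograph_split hG U (by omega)
  have hcard : H1.card + H2.card = U.card := by rw [← hU, card_union_of_disjoint hd]
  have p1 := card_pos.2 n1
  have p2 := card_pos.2 n2
  have comb : ∀ L1 L2, Good G m β (fun _ => True) H1 L1 → Good G m β (fun _ => True) H2 L2 →
      Good G m β (fun _ => True) U (L1 + L2) := by
    intro L1 L2 g1 g2
    rw [← hU]
    exact g1.union g2 hd (fun _ _ => trivial) (fun _ _ => trivial)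
      (fun A B hA hB _ _ => hh.sub hA hB)
  -- mixed case
  have mixed : ∀ H1 H2 : Finset V, 0 < H1.card → Disjoint H1 H2 → H1 ∪ H2 = U → HomP G H1 H2 →
      H1.card ≤ m → m < H2.card →
      Good G m β (fun _ => True) (C ∪ U) ((20 * k - 30) * (β * m)) := by
    intro H1 H2 p1 hd hU hh h1 h2
    have hcard : H1.card + H2.card = U.card := by rw [← hU, card_union_of_disjoint hd]
    have hH1U : H1 ⊆ U := hU ▸ subset_union_left
    have hH2U : H2 ⊆ U := hU ▸ subset_union_right
    have hCH1 : Disjoint C H1 := Finset.disjoint_of_subset_right hH1U hCU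
    have hCH2 : Disjoint C H2 := Finset.disjoint_of_subset_right hH2U hCU
    by_cases hs : C.card + H1.card ≤ m
    · obtain ⟨N, hN⟩ : ∃ N, ∀ x ∈ C, r x < N :=
        ⟨C.sup r + 1, fun x hx => Nat.lt_succ_of_le (le_sup hx)⟩
      obtain ⟨s, hs'⟩ : ∃ s : Bool, ∀ x ∈ H1, ∀ y ∈ H2, (G.Adj x y ↔ s = true) := by
        rcases hh with h | h
        · exact ⟨true, fun x hx y hy => by simp [h x hx y hy]⟩
        · exact ⟨false, fun x hx y hy => by simp [h x hx y hy]⟩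
      have hCn : ∀ x ∈ C, x ∉ H1 := fun x hx h => Finset.disjoint_left.1 hCH1 hx h
      have := ih H2.card (by omega) H2 (C ∪ H1) (fun x => if x ∈ H1 then N else r x)
        (fun x => if x ∈ H1 then s else σ x) k rfl h2
        (by rw [card_union_of_disjoint hCH1]; exact hs)
        (by rw [disjoint_union_left]; exact ⟨hCH2, hd⟩)
        ⟨?_, ?_⟩ ?_ (by rw [card_union_of_disjoint hCH1]; omega)
      · rwa [union_assoc, hU] at this
      · intro x hx y hy hxy
        rcases mem_union.1 hx with hx | hx <;> rcases mem_union.1 hy with hy | hy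
        · simp only [hCn x hx, hCn y hy, if_false] at hxy ⊢
          exact hO.1 x hx y hy hxy
        · simp only [hCn x hx, if_false]
          exact hCσ x hx y (hH1U hy)
        · simp only [hx, hCn y hy, if_true, if_false] at hxy
          have := hN y hy
          omega
        · simp [hx, hy] at hxy
      · intro x hx y hy hxy
        rcases mem_union.1 hx with hx | hx <;> rcases mem_union.1 hy with hy | hy
        · simp only [hCn x hx, hCn y hy, if_false] at hxy ⊢
          exact hO.2 x hx y hy hxy
        · simp only [hCn x hx, hy, if_false, if_true] at hxy
          have := hN x hx
          omega
        · simp only [hx, hCn y hy, if_true, if_false] at hxy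
          have := hN y hy
          omega
        · simp [hx, hy]
      · intro x hx y hy
        rcases mem_union.1 hx with hx | hx
        · simp only [hCn x hx, if_false]
          exact hCσ x hx y (hH2U hy)
        · simp only [hx, if_true]
          exact hs' x hx y hy
    · obtain ⟨k', rfl⟩ : ∃ k', k = k' + 1 := ⟨k - 1, by omega⟩
      have e : (k' + 1) * m = k' * m + m := by ring
      have g2 := ih0 H2 k' (by omega) h2 (by omega)
      have g1 : Good G m β (fun _ => True) H1 (β * m) :=
        Good.single hβ0.le trivial (by exact_mod_cast h1)
      have g := g1.union g2 (Q := fun _ => True) hd (fun _ _ => trivial) (fun _ _ => trivial)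
        (fun A B hA hB _ _ => hh.sub hA hB)
      rw [hU] at g
      refine fin _ g ?_
      push_cast
      nlinarith
  by_cases c1 : m < H1.card
  · by_cases c2 : m < H2.card
    · obtain ⟨k1, hk1, hk1'⟩ : ∃ k1 : ℕ, k1 * m < H1.card ∧ H1.card ≤ (k1 + 1) * m := by
        refine ⟨(H1.card - 1) / m, ?_, ?_⟩
        · have := Nat.div_mul_le_self (H1.card - 1) m
          omega
        · have := Nat.lt_div_mul_add (a := H1.card - 1) (show 0 < m by omega)
          rw [Nat.add_mul, Nat.one_mul]
          omega
      have hlt : k1 < k := by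
        by_contra hcon
        have : k * m ≤ k1 * m := Nat.mul_le_mul_right _ (by omega)
        omega
      obtain ⟨k2, rfl⟩ : ∃ k2, k = k1 + k2 := ⟨k - k1, by omega⟩
      have e : (k1 + k2) * m = k1 * m + k2 * m := by ring
      have g1 := ih0 H1 (k1 + 1) (by omega) c1 hk1'
      have g2 := ih0 H2 k2 (by omega) c2 (by omega)
      refine fin _ (comb _ _ g1 g2) ?_
      push_cast
      nlinarith
    · exact mixed H2 H1 p2 hd.symm (by rw [union_comm]; exact hU) hh.symm (by omega) c1
  · by_cases c2 : m < H2.card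
    · exact mixed H1 H2 p1 hd hU hh (by omega) c2
    · have g1 : Good G m β (fun _ => True) H1 (β * m) :=
        Good.single hβ0.le trivial (by exact_mod_cast (show H1.card ≤ m by omega))
      have g2 : Good G m β (fun _ => True) H2 (β * m) :=
        Good.single hβ0.le trivial (by exact_mod_cast (show H2.card ≤ m by omega))
      refine fin _ (comb _ _ g1 g2) ?_
      nlinarith

end helpers

/-- Cograph partition lemma: every cograph has a partition `S ∪ V₁ ∪ ⋯ ∪ V_t` in which all
pairs of parts outside a matching `M` are homogeneous, and matched pairs carry the extra
structure in item (4). -/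
theorem cograph_partition {V : Type} [Fintype V] [DecidableEq V]
    (G : SimpleGraph V) (hG : IsCograph G)
    (m : ℕ) (hm : 1 ≤ m) (hmn : m < Fintype.card V)
    (β : ℝ) (hβ0 : 0 < β) (hβ1 : β < 1) :
    ∃ (t : ℕ) (S : Finset V) (Vp : Fin t → Finset V) (M : Finset (Fin t × Fin t)),
      -- the sets form a partition of V(G)
      (∀ i, Disjoint S (Vp i)) ∧
      (∀ i j, i ≠ j → Disjoint (Vp i) (Vp j)) ∧
      (S ∪ (Finset.univ : Finset (Fin t)).biUnion Vp = Finset.univ) ∧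
      -- M is a set of pairs {i,j} with i < j forming a matching
      (∀ p ∈ M, p.1 < p.2) ∧
      (∀ p ∈ M, ∀ q ∈ M, p ≠ q →
        p.1 ≠ q.1 ∧ p.1 ≠ q.2 ∧ p.2 ≠ q.1 ∧ p.2 ≠ q.2) ∧
      -- (1)
      ((S.card : ℝ) ≤ (2 * (⌈(Fintype.card V : ℝ) / (m : ℝ)⌉ : ℝ) - 3) * (10 * β * m)) ∧
      ((2 * (⌈(Fintype.card V : ℝ) / (m : ℝ)⌉ : ℝ) - 3) * (10 * β * m)
        ≤ 20 * β * (Fintype.card V : ℝ)) ∧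
      -- (2)
      (∀ i, β * m ≤ ((Vp i).card : ℝ) ∧ ((Vp i).card : ℝ) ≤ (m : ℝ)) ∧
      -- (3)
      (∀ i j : Fin t, i < j → (i, j) ∉ M →
        CompleteTo G (Vp i) (Vp j) ∨ EmptyTo G (Vp i) (Vp j)) ∧
      -- (4)
      (∀ p ∈ M, ∃ Vi' ⊆ Vp p.1, ∃ Vj' ⊆ Vp p.2,
        β ^ 3 * m / 2 ≤ (Vi'.card : ℝ) ∧ β ^ 3 * m / 2 ≤ (Vj'.card : ℝ) ∧
        ((CompleteTo G Vi' (Vp p.2) ∧ CompleteTo G Vj' (Vp p.1)) ∨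
         (EmptyTo G Vi' (Vp p.2) ∧ EmptyTo G Vj' (Vp p.1)))) := by
  classical
  have hmR : (1 : ℝ) ≤ m := by exact_mod_cast hm
  have hm0 : (0 : ℝ) < m := by linarith
  have hbm : 0 < β * m := by positivity
  set k := ⌈(Fintype.card V : ℝ) / (m : ℝ)⌉₊ with hk
  have hkint : (⌈(Fintype.card V : ℝ) / (m : ℝ)⌉ : ℝ) = (k : ℝ) := by
    rw [hk, natCast_ceil_eq_intCast_ceil (by positivity)]
  have hkm : Fintype.card V ≤ k * m := by
    have := Nat.le_ceil ((Fintype.card V : ℝ) / (m : ℝ))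
    rw [div_le_iff₀ hm0] at this
    exact_mod_cast this
  have hkn : ((k : ℝ) - 1) * m ≤ Fintype.card V := by
    have := Nat.ceil_lt_add_one (a := (Fintype.card V : ℝ) / (m : ℝ)) (by positivity)
    have h2 : (k : ℝ) - 1 ≤ (Fintype.card V : ℝ) / (m : ℝ) := by linarith
    rwa [le_div_iff₀ hm0] at h2
  have g := main_rec (G := G) hG hβ0 hβ1 hm _ Finset.univ ∅ (fun _ => 0) (fun _ => true) k rfl
    (by simpa using hmn) (by simp) (by simp) ⟨by simp, by simp⟩ (by simp) (by simpa using hkm)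
  rw [empty_union] at g
  obtain ⟨P, h1, h2, h3, h4, h5⟩ := g
  let e := P.equivFin.symm
  have hne : ∀ i j, i ≠ j → (e i : Finset V) ≠ (e j : Finset V) := fun i j h h' =>
    h (e.injective (Subtype.ext h'))
  have hin : ∀ i j, (e i : Finset V) = (e j : Finset V) → i = j := fun i j h' =>
    e.injective (Subtype.ext h')
  have hU : (Finset.univ : Finset (Fin P.card)).biUnion (fun i => (e i : Finset V)) =
      P.biUnion id := by
    ext x
    simp only [mem_biUnion, mem_univ, true_and, id]
    constructor
    · rintro ⟨i, hi⟩
      exact ⟨_, (e i).2, hi⟩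
    · rintro ⟨A, hA, hx⟩
      exact ⟨e.symm ⟨A, hA⟩, by simpa using hx⟩
  refine ⟨P.card, Finset.univ \ P.biUnion id, fun i => (e i : Finset V),
    Finset.univ.filter (fun p => p.1 < p.2 ∧ ¬ HomP G (e p.1 : Finset V) (e p.2 : Finset V)),
    ?_, ?_, ?_, ?_, ?_, ?_, ?_, ?_, ?_, ?_⟩
  · intro i
    rw [Finset.disjoint_left]
    intro x hx hx'
    exact (mem_sdiff.1 hx).2 (mem_biUnion.2 ⟨_, (e i).2, hx'⟩)
  · intro i j h
    exact h2 _ (e i).2 _ (e j).2 (hne i j h)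
  · rw [hU]
    exact sdiff_union_of_subset (subset_univ _)
  · intro p hp
    exact (mem_filter.1 hp).2.1
  · rintro ⟨a, b⟩ hp ⟨c, d⟩ hq hpq
    obtain ⟨-, hp1, hp2⟩ := mem_filter.1 hp
    obtain ⟨-, hq1, hq2⟩ := mem_filter.1 hq
    have u : ∀ i j l, i ≠ j → i ≠ l → ¬ HomP G (e i : Finset V) (e j : Finset V) →
        ¬ HomP G (e i : Finset V) (e l : Finset V) → j = l := fun i j l h h' n n' =>
      hin _ _ (h4 _ (e i).2 _ (e j).2 _ (e l).2 (hne _ _ h) (hne _ _ h') n n')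
    have hp3 : ¬ HomP G (e b : Finset V) (e a : Finset V) := fun h => hp2 h.symm
    have hq3 : ¬ HomP G (e d : Finset V) (e c : Finset V) := fun h => hq2 h.symm
    dsimp only at *
    refine ⟨?_, ?_, ?_, ?_⟩
    · rintro rfl
      exact hpq (by rw [u a b d hp1.ne hq1.ne hp2 hq2])
    · rintro rfl
      have := u a b c hp1.ne hq1.ne' hp2 hq3
      subst this
      exact lt_asymm hp1 hq1
    · rintro rfl
      have := u b a d hp1.ne' hq1.ne hp3 hq2
      subst this
      exact lt_asymm hp1 hq1
    · rintro rfl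
      exact hpq (by rw [u b a c hp1.ne' hq1.ne' hp3 hq3])
  · rw [hkint]
    refine h3.trans (le_of_eq ?_)
    ring
  · rw [hkint]
    nlinarith
  · intro i
    exact ⟨(h1 _ (e i).2).2.1, (h1 _ (e i).2).2.2.1⟩
  · intro i j hij hn
    by_contra hc
    exact hn (mem_filter.2 ⟨mem_univ _, hij, hc⟩)
  · intro p hp
    obtain ⟨-, hp1, hp2⟩ := mem_filter.1 hp
    exact h5 _ (e p.1).2 _ (e p.2).2 (hne _ _ hp1.ne) hp2
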